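/- arXiv:1110.6930 — 8 statements merged into one kernel-verified Lean document; each statement's English description precedes it below -/
import Mathlib

section
/- Let M be an invertible m×m matrix over A. Then det(M) • Σ_{u,v=1}^m (M⁻¹)_{u,v} • d(M_{v,u}) = d(det M) in Ω_{A|k}. -/
/-!
By the Leibniz rule, `D (det M)` is a sum over the columns `u` of the Leibniz expansion of `det M`
with column `u` replaced by its derivative. Expanding along that column, whose cofactors are the
entries of row `u` of the adjugate, gives Jacobi's formula
`D (det M) = ∑ u, ∑ v, adj(M) u v • D (M v u)`; for invertible `M`, `adj(M) = det M • M⁻¹`.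
-/

section Derivation

variable {R A N : Type*} [CommSemiring R] [CommSemiring A] [Algebra R A] [AddCommMonoid N]
  [Module A N] [Module R N]

theorem derivation_prod {ι : Type*} [DecidableEq ι] (D : Derivation R A N) (s : Finset ι)
    (f : ι → A) :
    D (∏ i ∈ s, f i) = ∑ i ∈ s, (∏ j ∈ s.erase i, f j) • D (f i) := by
  induction s using Finset.induction_on with
  | empty => simp
  | insert a s ha ih =>
    have prod_erase_insert (i : ι) (hi : i ∈ s) :
        ∏ j ∈ (insert a s).erase i, f j = f a * ∏ j ∈ s.erase i, f j := by
      rw [Finset.erase_insert_of_ne (ne_of_mem_of_not_mem hi ha).symm,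
        Finset.prod_insert fun h => ha (Finset.mem_of_mem_erase h)]
    calc
      D (∏ i ∈ insert a s, f i) = (∏ i ∈ s, f i) • D (f a) + f a • D (∏ i ∈ s, f i) := by
        rw [Finset.prod_insert ha, D.leibniz, add_comm]
      _ = (∏ i ∈ s, f i) • D (f a) + ∑ i ∈ s, (f a * ∏ j ∈ s.erase i, f j) • D (f i) := by
        simp only [ih, Finset.smul_sum, smul_smul]
      _ = ∑ i ∈ insert a s, (∏ j ∈ (insert a s).erase i, f j) • D (f i) := by
        rw [Finset.sum_insert ha, Finset.erase_insert ha]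
        congr 1
        exact Finset.sum_congr rfl fun i hi => by rw [prod_erase_insert i hi]

end Derivation

section Matrix

variable {n A : Type*} [Fintype n] [DecidableEq n] [CommRing A]

theorem adjugate_apply_eq_det_updateCol (M : Matrix n n A) (u v : n) :
    M.adjugate u v = (M.updateCol u (Pi.single v 1)).det := by
  rw [← Matrix.cramer_apply, Matrix.cramer_eq_adjugate_mulVec, Matrix.mulVec_single_one,
    Matrix.col_apply]

theorem det_updateCol_eq_sum_perm (M : Matrix n n A) (u : n) (b : n → A) :
    (M.updateCol u b).det = ∑ σ : Equiv.Perm n,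
      (σ.sign • ∏ j ∈ Finset.univ.erase u, M (σ j) j) * b (σ u) := by
  rw [Matrix.det_apply]
  refine Finset.sum_congr rfl fun σ _ => ?_
  rw [← Finset.prod_erase_mul _ _ (Finset.mem_univ u), Matrix.updateCol_self, smul_mul_assoc]
  congr 2
  exact Finset.prod_congr rfl fun j hj => Matrix.updateCol_ne (Finset.ne_of_mem_erase hj)

theorem sum_adjugate_smul {N : Type*} [AddCommMonoid N] [Module A N] (M : Matrix n n A) (u : n)
    (x : n → N) :
    ∑ v, M.adjugate u v • x v = ∑ σ : Equiv.Perm n,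
      (σ.sign • ∏ j ∈ Finset.univ.erase u, M (σ j) j) • x (σ u) := by
  simp only [adjugate_apply_eq_det_updateCol, det_updateCol_eq_sum_perm, Finset.sum_smul]
  rw [Finset.sum_comm]
  simp [Pi.single_apply]

theorem det_smul_inv {M : Matrix n n A} (hM : IsUnit M.det) : M.det • M⁻¹ = M.adjugate := by
  rw [M.nonsing_inv_apply hM, smul_smul, hM.mul_val_inv, one_smul]

end Matrix

section Jacobi

variable {R A N n : Type*} [CommSemiring R] [CommRing A] [Algebra R A] [AddCommGroup N]
  [Module A N] [Module R N] [Fintype n] [DecidableEq n]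

theorem derivation_det (D : Derivation R A N) (M : Matrix n n A) :
    D M.det = ∑ u, ∑ v, M.adjugate u v • D (M v u) := by
  calc
    D M.det = ∑ σ : Equiv.Perm n, ∑ u,
        (σ.sign • ∏ j ∈ Finset.univ.erase u, M (σ j) j) • D (M (σ u) u) := by
      simp only [Matrix.det_apply, Units.smul_def, map_sum, map_zsmul, derivation_prod,
        Finset.smul_sum, smul_assoc]
    _ = ∑ u, ∑ v, M.adjugate u v • D (M v u) := by
      rw [Finset.sum_comm]
      exact Finset.sum_congr rfl fun u _ => (sum_adjugate_smul M u fun v => D (M v u)).symm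

theorem statement1_general (D : Derivation R A N) (M : Matrix n n A) (hM : IsUnit M.det) :
    M.det • ∑ u, ∑ v, M⁻¹ u v • D (M v u) = D M.det := by
  simp only [derivation_det, ← det_smul_inv hM, Matrix.smul_apply, smul_assoc, Finset.smul_sum]

end Jacobi

/-- For an invertible `m × m` matrix `M` over a commutative `k`-algebra `A`, one has
`det M • ∑_{u,v} (M⁻¹)_{u,v} • d (M_{v,u}) = d (det M)` in `Ω_{A|k}`. -/
theorem statement1 {k A : Type*} [CommRing k] [CommRing A] [Algebra k A]
    {m : ℕ} (M : Matrix (Fin m) (Fin m) A) (hM : IsUnit M.det) :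
    M.det • ∑ u : Fin m, ∑ v : Fin m,
        M⁻¹ u v • (KaehlerDifferential.D k A) (M v u) =
      (KaehlerDifferential.D k A) M.det :=
  statement1_general (KaehlerDifferential.D k A) M hM
end

section
/- Let A be a commutative ring, J ⊆ A an ideal, and P, Q, R, S m×m matrices over A such that every entry of Q·R − S lies in J and every entry of P·S − 1 lies in J. Then tr(P·(Q·R − S)) − det(P)·(det(Q)·det(R) − det(S)) ∈ J². -/
/-!
By Jacobi's formula, `det T - det S` agrees to first order with `tr (adj S * (T - S))`, the error
being a sum of determinants in which at least two rows come from `T - S`. Modulo `J` the matrix `P`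
is the inverse of `S`, hence congruent to `det P • adj S`; multiplying Jacobi's formula by `det P`
therefore turns the trace into `tr (P * (T - S))`, up to products of entries of `T - S` with
elements of `J`. Now take `T = Q * R`.
-/

section

open Matrix

variable {A n : Type*} [CommRing A] [Fintype n]

theorem trace_mul_mem_mul {m : Type*} [Fintype m] {I J : Ideal A}
    {M : Matrix m n A} {N : Matrix n m A}
    (hM : ∀ i j, M i j ∈ I) (hN : ∀ i j, N i j ∈ J) : (M * N).trace ∈ I * J :=
  Ideal.sum_mem _ fun i _ ↦ Ideal.sum_mem _ fun k _ ↦ Ideal.mul_mem_mul (hM i k) (hN k i)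

variable [DecidableEq n]

theorem det_mem_pow_card {I : Ideal A} {M : Matrix n n A} {s : Finset n}
    (hM : ∀ i ∈ s, ∀ j, M i j ∈ I) : M.det ∈ I ^ s.card := by
  rw [← det_transpose, det_apply']
  refine Ideal.sum_mem _ fun σ _ ↦ Ideal.mul_mem_left _ _ ?_
  rw [← Finset.prod_mul_prod_compl s, ← Finset.prod_const]
  exact Ideal.mul_mem_right _ _ (Ideal.prod_mem_prod fun i hi ↦ hM i hi (σ i))

theorem sum_det_updateRow_eq_trace_adjugate_mul (M N : Matrix n n A) :
    ∑ i, (M.updateRow i (N i)).det = (M.adjugate * N).trace := by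
  rw [trace_mul_comm]
  refine Finset.sum_congr rfl fun i _ ↦ ?_
  rw [← cramer_transpose_apply, cramer_eq_adjugate_mulVec, ← adjugate_transpose, mulVec_transpose]
  rfl

theorem det_add_sub_det_sub_trace_adjugate_mul_mem_sq {I : Ideal A} (M : Matrix n n A)
    {N : Matrix n n A} (hN : ∀ i j, N i j ∈ I) :
    (M + N).det - M.det - (M.adjugate * N).trace ∈ I ^ 2 := by
  have expansion : (M + N).det = M.det + ∑ i, (M.updateRow i (N i)).det +
      ∑ s : Finset n with 2 ≤ s.card, det (of (s.piecewise N.row M.row)) := by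
    have h := detRowAlternating.toMultilinearMap.map_add_eq_map_add_linearDeriv_add M.row N.row
    rwa [MultilinearMap.linearDeriv_apply] at h
  rw [expansion, sum_det_updateRow_eq_trace_adjugate_mul, add_assoc, add_sub_cancel_left,
    add_sub_cancel_left]
  refine Ideal.sum_mem _ fun s hs ↦ Ideal.pow_le_pow_right (Finset.mem_filter.mp hs).2 ?_
  refine det_mem_pow_card fun i hi j ↦ ?_
  rw [of_apply, Finset.piecewise_eq_of_mem _ _ _ hi]
  exact hN i j

theorem eq_det_smul_adjugate_of_mul_eq_one {P S : Matrix n n A} (h : P * S = 1) :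
    P = P.det • S.adjugate := by
  calc P = (P * S).adjugate * P := by rw [h, adjugate_one, one_mul]
    _ = S.adjugate * (P.adjugate * P) := by rw [adjugate_mul_distrib, mul_assoc]
    _ = P.det • S.adjugate := by rw [adjugate_mul, mul_smul_comm, mul_one]

theorem sub_det_smul_adjugate_apply_mem {J : Ideal A} {P S : Matrix n n A}
    (h : ∀ i j, (P * S - 1) i j ∈ J) (i j : n) : (P - P.det • S.adjugate) i j ∈ J := by
  let π := (Ideal.Quotient.mk J).mapMatrix (m := n)
  have hPS : π P * π S = 1 := by
    rw [← map_mul, ← sub_eq_zero, ← map_one π, ← map_sub]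
    ext i j
    exact Ideal.Quotient.eq_zero_iff_mem.mpr (h i j)
  have hP := congrFun₂ (eq_det_smul_adjugate_of_mul_eq_one hPS) i j
  rw [← RingHom.map_det, ← RingHom.map_adjugate] at hP
  exact Ideal.Quotient.eq.mp (hP.trans (map_mul _ _ _).symm)

theorem statement4_general {I J : Ideal A} {P S T : Matrix n n A}
    (hTS : ∀ i j, (T - S) i j ∈ I) (hPS : ∀ i j, (P * S - 1) i j ∈ J) :
    (P * (T - S)).trace - P.det * (T.det - S.det) ∈ I * (I ⊔ J) := by
  have inverse_error : ((P - P.det • S.adjugate) * (T - S)).trace ∈ I * J :=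
    mul_comm J I ▸ trace_mul_mem_mul (sub_det_smul_adjugate_apply_mem hPS) hTS
  have jacobi_error : T.det - S.det - (S.adjugate * (T - S)).trace ∈ I * I := by
    simpa only [add_sub_cancel, pow_two] using
      det_add_sub_det_sub_trace_adjugate_mul_mem_sq S hTS
  have decomposition : (P * (T - S)).trace - P.det * (T.det - S.det) =
      ((P - P.det • S.adjugate) * (T - S)).trace -
        P.det * (T.det - S.det - (S.adjugate * (T - S)).trace) := by
    rw [sub_mul P, smul_mul, trace_sub, trace_smul, smul_eq_mul]
    ring
  rw [decomposition]
  exact sub_mem (Ideal.mul_mono_right le_sup_right inverse_error)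
    (Ideal.mul_mem_left _ _ (Ideal.mul_mono_right le_sup_left jacobi_error))

end

/-- Let `A` be a commutative ring, `J ⊆ A` an ideal, and `P, Q, R, S` be `m × m` matrices over
`A` such that every entry of `Q * R - S` lies in `J` and every entry of `P * S - 1` lies in `J`.
Then `tr (P * (Q * R - S)) - det P * (det Q * det R - det S) ∈ J ^ 2`. -/
theorem statement4 {A : Type*} [CommRing A] (J : Ideal A) {m : ℕ}
    (P Q R S : Matrix (Fin m) (Fin m) A)
    (h1 : ∀ u v : Fin m, (Q * R - S) u v ∈ J)
    (h2 : ∀ u v : Fin m, (P * S - 1) u v ∈ J) :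
    (P * (Q * R - S)).trace - P.det * (Q.det * R.det - S.det) ∈ J ^ 2 := by
  simpa only [Matrix.det_mul, sup_idem, pow_two] using statement4_general h1 h2
end

section
/- Let A be a commutative ring, J ⊆ A an ideal, and p, q, r, s, p', q', r', s' ∈ A with qr − s ∈ J, q'r' − s' ∈ J, ps − 1 ∈ J, and p's' − 1 ∈ J. Then p(qr − s) + p'(q'r' − s') − pp'(qq'rr' − ss') ∈ J²; indeed this element equals (ps − 1)(p's' − 1) − (pqr − 1)(p'q'r' − 1). -/
/-!
Both `p * q * r` and `p * s` are congruent to `1` modulo `J`. Since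
`u * u' - 1 = (u - 1) + (u' - 1) + (u - 1) * (u' - 1)`, the map `u ↦ u - 1` turns products of
elements of `1 + J` into sums up to an error in `J ^ 2`. The element in question is the error for
`p * s` and `p' * s'` minus the error for `p * q * r` and `p' * q' * r'`.
-/

section Ring

variable {R : Type*} [Ring R]

theorem sub_add_sub_sub_mul_sub_mul_eq (u u' v v' : R) :
    (u - v) + (u' - v') - (u * u' - v * v') =
      (v - 1) * (v' - 1) - (u - 1) * (u' - 1) := by
  noncomm_ring

theorem sub_add_sub_sub_mul_sub_mul_mem_mul {I J : Ideal R} {u u' v v' : R}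
    (hu : u - 1 ∈ I) (hu' : u' - 1 ∈ J) (hv : v - 1 ∈ I) (hv' : v' - 1 ∈ J) :
    (u - v) + (u' - v') - (u * u' - v * v') ∈ I * J := by
  rw [sub_add_sub_sub_mul_sub_mul_eq]
  exact sub_mem (Ideal.mul_mem_mul hv hv') (Ideal.mul_mem_mul hu hu')

theorem mul_sub_one_mem_of_sub_mem {I : Ideal R} {a b c : R}
    (hab : a - b ∈ I) (hcb : c * b - 1 ∈ I) : c * a - 1 ∈ I := by
  have hcab : c * a - c * b ∈ I := mul_sub c a b ▸ I.mul_mem_left c hab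
  exact sub_add_sub_cancel (c * a) (c * b) 1 ▸ add_mem hcab hcb

end Ring

/-- Let `A` be a commutative ring, `J ⊆ A` an ideal, and `p, q, r, s, p', q', r', s' ∈ A` with
`q r - s ∈ J`, `q' r' - s' ∈ J`, `p s - 1 ∈ J` and `p' s' - 1 ∈ J`.  Then
`p (q r - s) + p' (q' r' - s') - p p' (q q' r r' - s s') ∈ J ^ 2`; indeed this element equals
`(p s - 1)(p' s' - 1) - (p q r - 1)(p' q' r' - 1)`. -/
theorem statement5 {A : Type*} [CommRing A] (J : Ideal A) (p q r s p' q' r' s' : A)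
    (h1 : q * r - s ∈ J) (h2 : q' * r' - s' ∈ J)
    (h3 : p * s - 1 ∈ J) (h4 : p' * s' - 1 ∈ J) :
    p * (q * r - s) + p' * (q' * r' - s') - p * p' * (q * q' * r * r' - s * s') ∈ J ^ 2 ∧
    p * (q * r - s) + p' * (q' * r' - s') - p * p' * (q * q' * r * r' - s * s') =
      (p * s - 1) * (p' * s' - 1) - (p * q * r - 1) * (p' * q' * r' - 1) := by
  have eq_sub_products :
      p * (q * r - s) + p' * (q' * r' - s') - p * p' * (q * q' * r * r' - s * s') =
        (p * q * r - p * s) + (p' * q' * r' - p' * s') -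
          (p * q * r * (p' * q' * r') - p * s * (p' * s')) := by
    ring
  have hpqr : p * q * r - 1 ∈ J := mul_assoc p q r ▸ mul_sub_one_mem_of_sub_mem h1 h3
  have hpqr' : p' * q' * r' - 1 ∈ J := mul_assoc p' q' r' ▸ mul_sub_one_mem_of_sub_mem h2 h4
  rw [eq_sub_products, sq J]
  exact ⟨sub_add_sub_sub_mul_sub_mul_mem_mul hpqr hpqr' h3 h4,
    sub_add_sub_sub_mul_sub_mul_eq _ _ _ _⟩
end

section
/- Let J ⊆ A be an ideal and a, b, a', b' ∈ A with ab − 1 ∈ J and a'b' − 1 ∈ J. Then b • d(a) + b' • d(a') − bb' • d(aa') lies in J·Ω_{A|k}. -/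
/-!
Modulo `J` the element `b` is an inverse of `a`, so `b • D a` is the logarithmic derivative of `a`,
and the Leibniz rule makes logarithmic derivatives additive. When `b` is not an inverse of `a`,
additivity fails exactly by multiples of the defects `a * b - 1` and `a' * b' - 1`.
-/

section Derivation

variable {R A M : Type*} [CommSemiring R] [CommRing A] [Algebra R A] [AddCommGroup M] [Module A M]
  [Module R M]

theorem derivation_mul_smul_apply_mul_sub (D : Derivation R A M) (a b a' b' : A) :
    (b * b') • D (a * a') - (b • D a + b' • D a') =
      (a' * b' - 1) • b • D a + (a * b - 1) • b' • D a' := by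
  rw [D.leibniz]
  module

theorem statement6_general (D : Derivation R A M) (J : Ideal A) (a b a' b' : A)
    (h : a * b - 1 ∈ J) (h' : a' * b' - 1 ∈ J) :
    b • D a + b' • D a' - (b * b') • D (a * a') ∈ J • (⊤ : Submodule A M) := by
  rw [sub_mem_comm_iff, derivation_mul_smul_apply_mul_sub]
  exact add_mem (Submodule.smul_mem_smul h' Submodule.mem_top)
    (Submodule.smul_mem_smul h Submodule.mem_top)

end Derivation

/-- Let `J ⊆ A` be an ideal and `a, b, a', b' ∈ A` with `a b - 1 ∈ J` and `a' b' - 1 ∈ J`.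
Then `b • d a + b' • d a' - (b b') • d (a a')` lies in `J · Ω_{A|k}`. -/
theorem statement6 {k A : Type*} [CommRing k] [CommRing A] [Algebra k A]
    (J : Ideal A) (a b a' b' : A) (h : a * b - 1 ∈ J) (h' : a' * b' - 1 ∈ J) :
    b • (KaehlerDifferential.D k A) a + b' • (KaehlerDifferential.D k A) a' -
        (b * b') • (KaehlerDifferential.D k A) (a * a') ∈
      J • (⊤ : Submodule A (KaehlerDifferential k A)) :=
  statement6_general (KaehlerDifferential.D k A) J a b a' b' h h'
end

section
/- Let k be a commutative ring, A a smooth commutative k-algebra, J ⊆ A an ideal, and B := A/J, and assume B is flat as a k-module. Let I ⊆ A ⊗_k A be the kernel of the multiplication map A ⊗_k A → A. Then the sequence 0 → J/J² →^β I ⊗_{A⊗_k A} (B ⊗_k B) →^α B ⊗_k B →^ε B → 0 is exact, where β sends the class of j ∈ J to (j⊗1 − 1⊗j) ⊗ 1 (in particular, β is well defined, i.e. the assignment j ↦ (j⊗1 − 1⊗j) ⊗ 1 kills J²), α is induced by the inclusion I ⊆ A ⊗_k A composed with the projection A ⊗_k A → B ⊗_k B (so α(x ⊗ m) = x̄·m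 where x̄ is the image of x in B ⊗_k B), and ε is the multiplication map b ⊗ b' ↦ bb'. -/
open TensorProduct

section

universe u
variable (k A : Type u) [CommRing k] [CommRing A] [Algebra k A] (J : Ideal A)

/-- The `A ⊗[k] A`-algebra structure on `(A ⧸ J) ⊗[k] (A ⧸ J)` given by the tensor square of
the quotient map. -/
noncomputable instance quotTensorAlgebra :
    Algebra (A ⊗[k] A) ((A ⧸ J) ⊗[k] (A ⧸ J)) :=
  ((Algebra.TensorProduct.map (Ideal.Quotient.mkₐ k J) (Ideal.Quotient.mkₐ k J)).toRingHom).toAlgebra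

/-- The map `β : J → I ⊗_{A ⊗ₖ A} (B ⊗ₖ B)`, `j ↦ (j ⊗ 1 - 1 ⊗ j) ⊗ 1`, where
`I = ker (A ⊗ₖ A → A)` and `B = A ⧸ J`. -/
noncomputable def betaFun (j : J) :
    (KaehlerDifferential.ideal k A) ⊗[A ⊗[k] A] ((A ⧸ J) ⊗[k] (A ⧸ J)) :=
  (⟨(j : A) ⊗ₜ[k] (1 : A) - (1 : A) ⊗ₜ[k] (j : A), by simp [RingHom.mem_ker]⟩ :
      KaehlerDifferential.ideal k A) ⊗ₜ[A ⊗[k] A] (1 : (A ⧸ J) ⊗[k] (A ⧸ J))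

/-- The map `α : I ⊗_{A ⊗ₖ A} (B ⊗ₖ B) → B ⊗ₖ B` induced by the inclusion `I ⊆ A ⊗ₖ A`
composed with the projection `A ⊗ₖ A → B ⊗ₖ B`, so `α (x ⊗ m) = x̄ · m`. -/
noncomputable def alphaMap :
    (KaehlerDifferential.ideal k A) ⊗[A ⊗[k] A] ((A ⧸ J) ⊗[k] (A ⧸ J)) →ₗ[A ⊗[k] A]
      ((A ⧸ J) ⊗[k] (A ⧸ J)) :=
  TensorProduct.lift
    ((LinearMap.lsmul (A ⊗[k] A) ((A ⧸ J) ⊗[k] (A ⧸ J))).comp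
      (KaehlerDifferential.ideal k A).subtype)

/-!
Write `R = A ⊗ₖ A`, `I = ker (R → A)` and `K = ker (R → B ⊗ₖ B)`. Since `B ⊗ₖ B = R / K`, the
module `I ⊗_R (B ⊗ₖ B)` is `I / K I`, and `β` sends `j` to the class of `j ⊗ 1 - 1 ⊗ j`.

The ideal `K` is generated by the elements `j ⊗ 1` and `1 ⊗ j` with `j ∈ J`. As both inclusions
`A → R` are sections of the multiplication map, every element of `K` is congruent modulo `K I` to
some `i ⊗ 1 + 1 ⊗ j`, which lies in `I` only if `j = -i`: this is exactness at `I / K I`. The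
Leibniz rule for `j ↦ j ⊗ 1 - 1 ⊗ j` shows that `β` kills `J²`.

For the converse, suppose `j ⊗ 1 - 1 ⊗ j ∈ K I`. In `A ⊗ₖ B` this gives
`j ⊗ 1 ∈ J (A ⊗ₖ B) · ker (A ⊗ₖ B → B)`. When `J ⊗ₖ B → A ⊗ₖ B` is injective, for instance when
`B` is flat, `J (A ⊗ₖ B)` is `J ⊗ₖ B`, and the product above is killed by the projection
`J ⊗ₖ B → J ⊗_A B = J / J²`. So the class of `j` in `J / J²` vanishes.
-/

section Retractions

variable {R S T : Type*} [CommRing R] [CommRing S] [CommRing T] [Algebra R S] [Algebra R T]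
  {s t : S →ₐ[R] T} {m : T →ₐ[R] S}

theorem sub_apply_apply_mem_map_mul_ker (hs : m.comp s = AlgHom.id R S) {J : Ideal S} {y : T}
    (hy : y ∈ J.map s) : y - s (m y) ∈ J.map s * RingHom.ker m := by
  have hms (a : S) : m (s a) = a := DFunLike.congr_fun hs a
  induction hy using Submodule.closure_induction with
  | zero => simp
  | add x y _ _ hx hy =>
    rw [map_add, map_add, add_sub_add_comm]
    exact add_mem hx hy
  | smul_mem r x hx =>
    obtain ⟨j, hj, rfl⟩ := hx
    have hr : r - s (m r) ∈ RingHom.ker m := by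
      rw [RingHom.mem_ker, map_sub, hms, sub_self]
    have hfactor : r • s j - s (m (r • s j)) = s j * (r - s (m r)) := by
      rw [smul_eq_mul, map_mul, map_mul, hms]
      ring
    rw [hfactor]
    exact Ideal.mul_mem_mul (Ideal.mem_map_of_mem s hj) hr

theorem exists_sub_sub_mem_map_sup_map_mul_ker (hs : m.comp s = AlgHom.id R S)
    (ht : m.comp t = AlgHom.id R S) {J : Ideal S} {x : T} (hx : x ∈ J.map s ⊔ J.map t)
    (hmx : m x = 0) :
    ∃ j ∈ J, x - (s j - t j) ∈ (J.map s ⊔ J.map t) * RingHom.ker m := by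
  obtain ⟨y, hy, z, hz, rfl⟩ := Submodule.mem_sup.1 hx
  have hmy : m y ∈ J := by
    have hle : J.map s ≤ J.comap m := Ideal.map_le_iff_le_comap.2 fun j hj ↦ by
      rwa [Ideal.mem_comap, Ideal.mem_comap, ← AlgHom.comp_apply, hs]
    exact hle hy
  have hmz : m z = -m y := by
    rwa [map_add, add_comm, add_eq_zero_iff_eq_neg] at hmx
  have hsplit : y + z - (s (m y) - t (m y)) = (y - s (m y)) + (z - t (m z)) := by
    rw [hmz, map_neg]
    ring
  refine ⟨m y, hmy, ?_⟩
  rw [hsplit]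
  exact add_mem (Ideal.mul_mono_left le_sup_left (sub_apply_apply_mem_map_mul_ker hs hy))
    (Ideal.mul_mono_left le_sup_right (sub_apply_apply_mem_map_mul_ker ht hz))

theorem sub_mem_map_sup_map_mul_ker_of_mem_sq (hs : m.comp s = AlgHom.id R S)
    (ht : m.comp t = AlgHom.id R S) {J : Ideal S} {j : S} (hj : j ∈ J ^ 2) :
    s j - t j ∈ (J.map s ⊔ J.map t) * RingHom.ker m := by
  have hker (a : S) : s a - t a ∈ RingHom.ker m := by
    rw [RingHom.mem_ker, map_sub, ← AlgHom.comp_apply, ← AlgHom.comp_apply, hs, ht, sub_self]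
  rw [pow_two] at hj
  induction hj using Submodule.mul_induction_on' with
  | mem_mul_mem a ha b hb =>
    have hleibniz : s (a * b) - t (a * b) = s a * (s b - t b) + t b * (s a - t a) := by
      rw [map_mul, map_mul]
      ring
    rw [hleibniz]
    exact add_mem
      (Ideal.mul_mem_mul (Ideal.mem_sup_left (Ideal.mem_map_of_mem s ha)) (hker b))
      (Ideal.mul_mem_mul (Ideal.mem_sup_right (Ideal.mem_map_of_mem t hb)) (hker a))
  | add x _ y _ hx hy =>
    rw [map_add, map_add, add_sub_add_comm]
    exact add_mem hx hy

end Retractions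

section BaseChangeAlongSurjection

theorem exists_tmul_one_eq {R S M : Type*} [CommSemiring R] [Semiring S] [Algebra R S]
    [AddCommMonoid M] [Module R M] (h : Function.Surjective (algebraMap R S)) (z : M ⊗[R] S) :
    ∃ m : M, m ⊗ₜ[R] (1 : S) = z := by
  obtain ⟨m, hm⟩ := TensorProduct.mk_surjective R M S h (TensorProduct.comm R M S z)
  exact ⟨m, (TensorProduct.comm R M S).injective hm⟩

variable {R S : Type*} [CommRing R] [Ring S] [Algebra R S]

theorem tmul_one_eq_zero_iff_mem_ker_smul_top {M : Type*} [AddCommGroup M] [Module R M]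
    (h : Function.Surjective (algebraMap R S)) (m : M) :
    m ⊗ₜ[R] (1 : S) = 0 ↔ m ∈ RingHom.ker (algebraMap R S) • (⊤ : Submodule R M) := by
  let quotEquiv : (R ⧸ RingHom.ker (algebraMap R S)) ≃ₐ[R] S :=
    Ideal.quotientKerAlgEquivOfSurjective (f := Algebra.ofId R S) h
  let e := (quotEquiv.symm.toLinearEquiv.lTensor M).trans
    (TensorProduct.tensorQuotEquivQuotSMul M (RingHom.ker (algebraMap R S)))
  have he : e (m ⊗ₜ[R] (1 : S)) = Submodule.Quotient.mk m := by
    rw [LinearEquiv.trans_apply, LinearEquiv.lTensor_tmul, AlgEquiv.toLinearEquiv_apply, map_one,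
      ← map_one (Ideal.Quotient.mk _), TensorProduct.tensorQuotEquivQuotSMul_tmul_mk, one_smul]
  rw [← e.map_eq_zero_iff, he, Submodule.Quotient.mk_eq_zero]

theorem ideal_tmul_one_eq_zero_iff (h : Function.Surjective (algebraMap R S)) {I : Ideal R}
    (x : I) : x ⊗ₜ[R] (1 : S) = 0 ↔ (x : R) ∈ RingHom.ker (algebraMap R S) * I := by
  rw [tmul_one_eq_zero_iff_mem_ker_smul_top h, Submodule.mem_smul_top_iff, smul_eq_mul]

end BaseChangeAlongSurjection

section IdealTensor

open TensorProduct.AlgebraTensorModule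

variable {R S T : Type*} [CommSemiring R] [CommSemiring S] [CommSemiring T] [Algebra R S]
  [Algebra R T]

theorem rTensor_subtype_rTensor_toSpanSingleton {J : Ideal S} (j : J) (x : S ⊗[R] T) :
    rTensor R T J.subtype (rTensor R T (LinearMap.toSpanSingleton S J j) x) = (j : S) • x := by
  induction x with
  | zero => simp
  | add x y hx hy => simp only [map_add, hx, hy, smul_add]
  | tmul a c => simp [TensorProduct.smul_tmul', mul_comm]

variable [Algebra S T] [IsScalarTower R S T]

theorem mapOfCompatibleSMul_rTensor_toSpanSingleton {M : Type*} [AddCommMonoid M] [Module R M]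
    [Module S M] [IsScalarTower R S M] (m : M) (x : S ⊗[R] T) :
    TensorProduct.mapOfCompatibleSMul S R S M T (rTensor R T (LinearMap.toSpanSingleton S M m) x) =
      m ⊗ₜ[S]
        Algebra.TensorProduct.productMap (IsScalarTower.toAlgHom R S T) (AlgHom.id R T) x := by
  induction x with
  | zero => simp
  | add x y hx hy => simp only [map_add, hx, hy, TensorProduct.tmul_add]
  | tmul a c => simp [TensorProduct.smul_tmul, Algebra.smul_def]

theorem mapOfCompatibleSMul_eq_zero_of_rTensor_subtype_mem_mul {J : Ideal S}
    (hJ : Function.Injective (rTensor R T J.subtype)) {z : J ⊗[R] T}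
    (hz : rTensor R T J.subtype z ∈ J.map (algebraMap S (S ⊗[R] T)) *
      RingHom.ker
        (Algebra.TensorProduct.productMap (IsScalarTower.toAlgHom R S T) (AlgHom.id R T))) :
    TensorProduct.mapOfCompatibleSMul S R S J T z = 0 := by
  set I := RingHom.ker
    (Algebra.TensorProduct.productMap (IsScalarTower.toAlgHom R S T) (AlgHom.id R T))
  have hle : (J.map (algebraMap S (S ⊗[R] T)) • I).restrictScalars S ≤
      (LinearMap.ker (TensorProduct.mapOfCompatibleSMul S R S J T)).map
        (rTensor R T J.subtype) := by
    rw [Ideal.smul_restrictScalars, Submodule.smul_le]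
    intro j hj x hx
    refine ⟨rTensor R T (LinearMap.toSpanSingleton S J ⟨j, hj⟩) x, ?_,
      rTensor_subtype_rTensor_toSpanSingleton ⟨j, hj⟩ x⟩
    rw [SetLike.mem_coe, LinearMap.mem_ker, mapOfCompatibleSMul_rTensor_toSpanSingleton,
      RingHom.mem_ker.1 hx, TensorProduct.tmul_zero]
  obtain ⟨w, hw, hwz⟩ := hle hz
  rwa [← hJ hwz]

end IdealTensor

theorem surjective_algebraMap_quotTensor :
    Function.Surjective (algebraMap (A ⊗[k] A) ((A ⧸ J) ⊗[k] (A ⧸ J))) :=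
  TensorProduct.map_surjective (Ideal.Quotient.mkₐ_surjective k J)
    (Ideal.Quotient.mkₐ_surjective k J)

theorem ker_algebraMap_quotTensor :
    RingHom.ker (algebraMap (A ⊗[k] A) ((A ⧸ J) ⊗[k] (A ⧸ J))) =
      J.map (Algebra.TensorProduct.includeLeft : A →ₐ[k] A ⊗[k] A) ⊔
        J.map (Algebra.TensorProduct.includeRight : A →ₐ[k] A ⊗[k] A) := by
  have hker := Algebra.TensorProduct.map_ker (Ideal.Quotient.mkₐ k J) (Ideal.Quotient.mkₐ k J)
    (Ideal.Quotient.mkₐ_surjective k J) (Ideal.Quotient.mkₐ_surjective k J)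
  have hJ : RingHom.ker (Ideal.Quotient.mkₐ k J) = J := Ideal.Quotient.mkₐ_ker k J
  rwa [hJ] at hker

theorem mul'_algebraMap_quotTensor (x : A ⊗[k] A) :
    LinearMap.mul' k (A ⧸ J) (algebraMap (A ⊗[k] A) ((A ⧸ J) ⊗[k] (A ⧸ J)) x) =
      Ideal.Quotient.mk J (Algebra.TensorProduct.lmul' k x) := by
  have hcomp : (Algebra.TensorProduct.lmul' k).comp
      (Algebra.TensorProduct.map (Ideal.Quotient.mkₐ k J) (Ideal.Quotient.mkₐ k J)) =
        (Ideal.Quotient.mkₐ k J).comp (Algebra.TensorProduct.lmul' k) := by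
    ext <;> simp
  exact DFunLike.congr_fun hcomp x

theorem alphaMap_tmul_one (x : KaehlerDifferential.ideal k A) :
    alphaMap k A J (x ⊗ₜ[A ⊗[k] A] (1 : (A ⧸ J) ⊗[k] (A ⧸ J))) =
      algebraMap (A ⊗[k] A) ((A ⧸ J) ⊗[k] (A ⧸ J)) x :=
  (Algebra.algebraMap_eq_smul_one (A := (A ⧸ J) ⊗[k] (A ⧸ J)) (x : A ⊗[k] A)).symm

theorem betaFun_eq_zero_iff_mem_map_sup_map_mul_ideal (j : J) :
    betaFun k A J j = 0 ↔ (j : A) ⊗ₜ[k] (1 : A) - 1 ⊗ₜ[k] (j : A) ∈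
      (J.map (Algebra.TensorProduct.includeLeft : A →ₐ[k] A ⊗[k] A) ⊔
        J.map (Algebra.TensorProduct.includeRight : A →ₐ[k] A ⊗[k] A)) *
          KaehlerDifferential.ideal k A := by
  rw [betaFun, ideal_tmul_one_eq_zero_iff (surjective_algebraMap_quotTensor k A J),
    ker_algebraMap_quotTensor]

theorem betaFun_eq_zero_of_mem_sq {j : J} (hj : (j : A) ∈ J ^ 2) : betaFun k A J j = 0 :=
  (betaFun_eq_zero_iff_mem_map_sup_map_mul_ideal k A J j).2
    (sub_mem_map_sup_map_mul_ker_of_mem_sq Algebra.TensorProduct.lmul'_comp_includeLeft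
      Algebra.TensorProduct.lmul'_comp_includeRight hj)

theorem map_id_mkₐ_map_sup_map_mul_ideal_le :
    ((J.map (Algebra.TensorProduct.includeLeft : A →ₐ[k] A ⊗[k] A) ⊔
        J.map (Algebra.TensorProduct.includeRight : A →ₐ[k] A ⊗[k] A)) *
          KaehlerDifferential.ideal k A).map
        (Algebra.TensorProduct.map (AlgHom.id k A) (Ideal.Quotient.mkₐ k J)) ≤
      J.map (algebraMap A (A ⊗[k] (A ⧸ J))) *
        RingHom.ker (Algebra.TensorProduct.productMap
          (IsScalarTower.toAlgHom k A (A ⧸ J)) (AlgHom.id k (A ⧸ J))) := by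
  have hcomp : (Algebra.TensorProduct.productMap
      (IsScalarTower.toAlgHom k A (A ⧸ J)) (AlgHom.id k (A ⧸ J))).comp
        (Algebra.TensorProduct.map (AlgHom.id k A) (Ideal.Quotient.mkₐ k J)) =
      (Ideal.Quotient.mkₐ k J).comp (Algebra.TensorProduct.lmul' k) := by
    ext <;> simp
  rw [Ideal.map_mul, Ideal.map_sup]
  refine Ideal.mul_mono (sup_le ?_ ?_) ?_
  · rw [Ideal.map_mapₐ, Algebra.TensorProduct.map_comp_includeLeft, AlgHom.comp_id]
    exact le_rfl
  · rw [Ideal.map_mapₐ, Ideal.map_le_iff_le_comap]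
    intro j hj
    simp [Ideal.Quotient.eq_zero_iff_mem.2 hj]
  · rw [Ideal.map_le_iff_le_comap]
    intro x hx
    rw [Ideal.mem_comap, RingHom.mem_ker, ← AlgHom.comp_apply, hcomp, AlgHom.comp_apply,
      RingHom.mem_ker.1 hx, map_zero]

theorem mem_sq_of_betaFun_eq_zero
    (hJ : Function.Injective (LinearMap.rTensor (A ⧸ J) (J.subtype.restrictScalars k))) {j : J}
    (hj : betaFun k A J j = 0) : (j : A) ∈ J ^ 2 := by
  have hmem : (j : A) ⊗ₜ[k] (1 : A ⧸ J) ∈ J.map (algebraMap A (A ⊗[k] (A ⧸ J))) *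
      RingHom.ker (Algebra.TensorProduct.productMap
        (IsScalarTower.toAlgHom k A (A ⧸ J)) (AlgHom.id k (A ⧸ J))) := by
    have himage := map_id_mkₐ_map_sup_map_mul_ideal_le k A J (Ideal.mem_map_of_mem _
      ((betaFun_eq_zero_iff_mem_map_sup_map_mul_ideal k A J j).1 hj))
    simpa [Ideal.Quotient.eq_zero_iff_mem.2 j.2] using himage
  have hzero : j ⊗ₜ[A] (1 : A ⧸ J) = 0 :=
    mapOfCompatibleSMul_eq_zero_of_rTensor_subtype_mem_mul (z := j ⊗ₜ[k] (1 : A ⧸ J)) hJ hmem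
  rwa [ideal_tmul_one_eq_zero_iff Ideal.Quotient.mk_surjective, Ideal.Quotient.algebraMap_eq,
    Ideal.mk_ker, ← pow_two] at hzero

theorem alphaMap_betaFun (j : J) : alphaMap k A J (betaFun k A J j) = 0 := by
  rw [betaFun, alphaMap_tmul_one, ← RingHom.mem_ker, ker_algebraMap_quotTensor]
  exact sub_mem (Ideal.mem_sup_left (Ideal.mem_map_of_mem _ j.2))
    (Ideal.mem_sup_right (Ideal.mem_map_of_mem _ j.2))

theorem exact_betaFun_alphaMap : Function.Exact (betaFun k A J) (alphaMap k A J) := by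
  intro z
  constructor
  · intro hz
    obtain ⟨x, rfl⟩ := exists_tmul_one_eq (surjective_algebraMap_quotTensor k A J) z
    rw [alphaMap_tmul_one, ← RingHom.mem_ker, ker_algebraMap_quotTensor] at hz
    obtain ⟨j, hj, hxj⟩ := exists_sub_sub_mem_map_sup_map_mul_ker
      Algebra.TensorProduct.lmul'_comp_includeLeft
      Algebra.TensorProduct.lmul'_comp_includeRight hz x.2
    refine ⟨⟨j, hj⟩, ?_⟩
    rwa [eq_comm, ← sub_eq_zero, betaFun, ← TensorProduct.sub_tmul,
      ideal_tmul_one_eq_zero_iff (surjective_algebraMap_quotTensor k A J),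
      ker_algebraMap_quotTensor]
  · rintro ⟨j, rfl⟩
    exact alphaMap_betaFun k A J j

theorem exact_alphaMap_mul' : Function.Exact (alphaMap k A J) (LinearMap.mul' k (A ⧸ J)) := by
  intro c
  constructor
  · intro hc
    obtain ⟨x, rfl⟩ := surjective_algebraMap_quotTensor k A J c
    rw [mul'_algebraMap_quotTensor, Ideal.Quotient.eq_zero_iff_mem] at hc
    have hker : algebraMap (A ⊗[k] A) ((A ⧸ J) ⊗[k] (A ⧸ J))
        (Algebra.TensorProduct.lmul' k x ⊗ₜ 1) = 0 := by
      rw [← RingHom.mem_ker, ker_algebraMap_quotTensor]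
      exact Ideal.mem_sup_left (Ideal.mem_map_of_mem _ hc)
    refine ⟨(⟨x - Algebra.TensorProduct.lmul' k x ⊗ₜ 1, by simp⟩ :
      KaehlerDifferential.ideal k A) ⊗ₜ 1, ?_⟩
    rw [alphaMap_tmul_one, map_sub, hker, sub_zero]
  · rintro ⟨z, rfl⟩
    obtain ⟨x, rfl⟩ := exists_tmul_one_eq (surjective_algebraMap_quotTensor k A J) z
    rw [alphaMap_tmul_one, mul'_algebraMap_quotTensor, RingHom.mem_ker.1 x.2, map_zero]

theorem statement7_general
    (hJ : Function.Injective (LinearMap.rTensor (A ⧸ J) (J.subtype.restrictScalars k))) :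
    (∀ j : J, betaFun k A J j = 0 ↔ (j : A) ∈ J ^ 2) ∧
    Function.Exact (betaFun k A J) (alphaMap k A J) ∧
    Function.Exact (alphaMap k A J) (LinearMap.mul' k (A ⧸ J)) ∧
    Function.Surjective (LinearMap.mul' k (A ⧸ J)) :=
  ⟨fun _ ↦ ⟨mem_sq_of_betaFun_eq_zero k A J hJ, betaFun_eq_zero_of_mem_sq k A J⟩,
    exact_betaFun_alphaMap k A J, exact_alphaMap_mul' k A J, fun b ↦ ⟨b ⊗ₜ 1, by simp⟩⟩

/-- **Huybrechts–Thomas exactness lemma, affine-local form.**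
Let `k` be a commutative ring, `A` a smooth commutative `k`-algebra, `J ⊆ A` an ideal with
`B := A ⧸ J` flat as a `k`-module, and `I ⊆ A ⊗ₖ A` the kernel of the multiplication map.
Then the sequence `0 → J/J² → I ⊗_{A ⊗ₖ A} (B ⊗ₖ B) → B ⊗ₖ B → B → 0` is exact, where the
maps are `β : j ↦ (j ⊗ 1 - 1 ⊗ j) ⊗ 1`, `α : x ⊗ m ↦ x̄ · m` and the multiplication
`ε : b ⊗ b' ↦ b b'`.  (Exactness at `J/J²` is expressed by `β j = 0 ↔ j ∈ J²`, which
simultaneously says that `β` kills `J²` and that the induced map on `J/J²` is injective.) -/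
theorem statement7 [Algebra.Smooth k A] [Module.Flat k (A ⧸ J)] :
    (∀ j : J, betaFun k A J j = 0 ↔ (j : A) ∈ J ^ 2) ∧
    Function.Exact (betaFun k A J) (alphaMap k A J) ∧
    Function.Exact (alphaMap k A J) (LinearMap.mul' k (A ⧸ J)) ∧
    Function.Surjective (LinearMap.mul' k (A ⧸ J)) := by
  exact statement7_general k A J
    (Module.Flat.rTensor_preserves_injective_linearMap _ Subtype.val_injective)

end
end

section
/- Let J ⊆ A be an ideal and, for indices a, b ∈ {1,2,3}, let M_{ab} be m×m matrices over A such that every entry of M_{ab}·M_{bc} − M_{ac} and every entry of M_{ab}·M_{ba} − 1 lies in J, for all a, b, c ∈ {1,2,3}. Then every entry of the Ω_{A|k}-valued matrix −M_{13}·d(M_{32}·M_{21} − M_{31}) + M_{12}·M_{23}·d(M_{32})·M_{21} − M_{13}·d(M_{31}) + M_{12}·d(M_{21}) lies in J·Ω_{A|k}. -/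
/-- Entrywise application of the universal derivation `d : A → Ω_{A|k}` to a matrix. -/
noncomputable def matD (k : Type*) {A : Type*} [CommRing k] [CommRing A] [Algebra k A]
    {m n : ℕ} (M : Matrix (Fin m) (Fin n) A) :
    Matrix (Fin m) (Fin n) (KaehlerDifferential k A) :=
  M.map (KaehlerDifferential.D k A)

/-- Product of a matrix over `A` with a matrix over an `A`-module `V`, using the scalar
action of `A` on `V`. -/
def matLMul {A V : Type*} [CommRing A] [AddCommMonoid V] [Module A V]
    {m n p : ℕ} (M : Matrix (Fin m) (Fin n) A) (W : Matrix (Fin n) (Fin p) V) :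
    Matrix (Fin m) (Fin p) V :=
  fun u v => ∑ x : Fin n, M u x • W x v

/-- Product of a matrix over an `A`-module `V` with a matrix over `A`, using the scalar
action of `A` on `V`. -/
def matRMul {A V : Type*} [CommRing A] [AddCommMonoid V] [Module A V]
    {m n p : ℕ} (W : Matrix (Fin m) (Fin n) V) (M : Matrix (Fin n) (Fin p) A) :
    Matrix (Fin m) (Fin p) V :=
  fun u v => ∑ x : Fin n, M x v • W u x

/-!
By the Leibniz rule, `M₁₃·d(M₃₂·M₂₁) = M₁₃·M₃₂·d(M₂₁) + M₁₃·d(M₃₂)·M₂₁`, and the two occurrences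
of `M₁₃·d(M₃₁)` cancel, so the matrix in question equals
`(M₁₂·M₂₃ - M₁₃)·d(M₃₂)·M₂₁ - (M₁₃·M₃₂ - M₁₂)·d(M₂₁)`.
Both coefficients in parentheses have their entries in `J`.
-/

section MatrixActions

variable {A V : Type*} [CommRing A] {m n p q : ℕ}

section AddCommMonoid

variable [AddCommMonoid V] [Module A V]

theorem matLMul_add (M : Matrix (Fin m) (Fin n) A) (W W' : Matrix (Fin n) (Fin p) V) :
    matLMul M (W + W') = matLMul M W + matLMul M W' := by
  ext u v
  simp [matLMul, Finset.sum_add_distrib]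

theorem mul_matLMul (M : Matrix (Fin m) (Fin n) A) (N : Matrix (Fin n) (Fin p) A)
    (W : Matrix (Fin p) (Fin q) V) :
    matLMul (M * N) W = matLMul M (matLMul N W) := by
  ext u v
  simp only [matLMul, Matrix.mul_apply, Finset.sum_smul, Finset.smul_sum, mul_smul]
  exact Finset.sum_comm

theorem matLMul_matRMul (M : Matrix (Fin m) (Fin n) A) (W : Matrix (Fin n) (Fin p) V)
    (N : Matrix (Fin p) (Fin q) A) :
    matLMul M (matRMul W N) = matRMul (matLMul M W) N := by
  ext u v
  simp only [matLMul, matRMul, Finset.smul_sum, smul_comm (M u _)]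
  exact Finset.sum_comm

theorem matLMul_apply_mem_smul {J : Ideal A} {N : Submodule A V}
    {M : Matrix (Fin m) (Fin n) A} {W : Matrix (Fin n) (Fin p) V} {u : Fin m} {v : Fin p}
    (hM : ∀ x, M u x ∈ J) (hW : ∀ x, W x v ∈ N) : matLMul M W u v ∈ J • N :=
  Submodule.sum_mem _ fun x _ => Submodule.smul_mem_smul (hM x) (hW x)

theorem map_derivation_mul {k : Type*} [CommSemiring k] [Algebra k A] [Module k V]
    (D : Derivation k A V) (M : Matrix (Fin m) (Fin n) A) (N : Matrix (Fin n) (Fin p) A) :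
    (M * N).map D = matLMul M (N.map D) + matRMul (M.map D) N := by
  ext u v
  simp [matLMul, matRMul, Matrix.mul_apply, Finset.sum_add_distrib]

end AddCommMonoid

section AddCommGroup

variable [AddCommGroup V] [Module A V]

theorem matLMul_sub (M : Matrix (Fin m) (Fin n) A) (W W' : Matrix (Fin n) (Fin p) V) :
    matLMul M (W - W') = matLMul M W - matLMul M W' := by
  ext u v
  simp [matLMul, smul_sub, Finset.sum_sub_distrib]

theorem sub_matLMul (M M' : Matrix (Fin m) (Fin n) A) (W : Matrix (Fin n) (Fin p) V) :
    matLMul (M - M') W = matLMul M W - matLMul M' W := by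
  ext u v
  simp [matLMul, sub_smul, Finset.sum_sub_distrib]

theorem atiyah_cocycle_eq {k : Type*} [CommSemiring k] [Algebra k A] [Module k V]
    (D : Derivation k A V)
    (M₁₂ : Matrix (Fin m) (Fin n) A) (M₂₃ : Matrix (Fin n) (Fin p) A)
    (M₁₃ : Matrix (Fin m) (Fin p) A) (M₃₂ : Matrix (Fin p) (Fin n) A)
    (M₂₁ : Matrix (Fin n) (Fin q) A) (M₃₁ : Matrix (Fin p) (Fin q) A) :
    -(matLMul M₁₃ ((M₃₂ * M₂₁ - M₃₁).map D)) +
        matRMul (matLMul (M₁₂ * M₂₃) (M₃₂.map D)) M₂₁ -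
        matLMul M₁₃ (M₃₁.map D) +
        matLMul M₁₂ (M₂₁.map D) =
      matLMul (M₁₂ * M₂₃ - M₁₃) (matRMul (M₃₂.map D) M₂₁) -
        matLMul (M₁₃ * M₃₂ - M₁₂) (M₂₁.map D) := by
  have leibniz : matLMul M₁₃ ((M₃₂ * M₂₁ - M₃₁).map D) =
      matLMul (M₁₃ * M₃₂) (M₂₁.map D) + matLMul M₁₃ (matRMul (M₃₂.map D) M₂₁) -
        matLMul M₁₃ (M₃₁.map D) := by
    rw [Matrix.map_sub D (map_sub D), map_derivation_mul, matLMul_sub, matLMul_add, mul_matLMul]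
  rw [leibniz, ← matLMul_matRMul, sub_matLMul, sub_matLMul]
  abel

end AddCommGroup

end MatrixActions

theorem statement11_general {k A V : Type*} [CommSemiring k] [CommRing A] [Algebra k A]
    [AddCommGroup V] [Module A V] [Module k V] (D : Derivation k A V) (J : Ideal A)
    {m n p q : ℕ}
    {M₁₂ : Matrix (Fin m) (Fin n) A} {M₂₃ : Matrix (Fin n) (Fin p) A}
    {M₁₃ : Matrix (Fin m) (Fin p) A} {M₃₂ : Matrix (Fin p) (Fin n) A}
    (M₂₁ : Matrix (Fin n) (Fin q) A) (M₃₁ : Matrix (Fin p) (Fin q) A)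
    (h₁₂₃ : ∀ u v, (M₁₂ * M₂₃ - M₁₃) u v ∈ J)
    (h₁₃₂ : ∀ u v, (M₁₃ * M₃₂ - M₁₂) u v ∈ J) (u : Fin m) (v : Fin q) :
    (-(matLMul M₁₃ ((M₃₂ * M₂₁ - M₃₁).map D)) +
        matRMul (matLMul (M₁₂ * M₂₃) (M₃₂.map D)) M₂₁ -
        matLMul M₁₃ (M₃₁.map D) +
        matLMul M₁₂ (M₂₁.map D)) u v ∈
      J • (⊤ : Submodule A V) := by
  rw [atiyah_cocycle_eq]
  exact Submodule.sub_mem _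
    (matLMul_apply_mem_smul (h₁₂₃ u) fun _ => Submodule.mem_top)
    (matLMul_apply_mem_smul (h₁₃₂ u) fun _ => Submodule.mem_top)

/-- Let `J ⊆ A` be an ideal and, for `a, b ∈ {1,2,3}` (here indexed by `Fin 3`), let `M a b`
be `m × m` matrices over `A` such that every entry of `M a b * M b c - M a c` and every entry
of `M a b * M b a - 1` lies in `J`.  Then every entry of the `Ω_{A|k}`-valued matrix
`-M₁₃·d(M₃₂·M₂₁ - M₃₁) + M₁₂·M₂₃·d(M₃₂)·M₂₁ - M₁₃·d(M₃₁) + M₁₂·d(M₂₁)` lies in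
`J · Ω_{A|k}` (with `(1,2,3) = (0,1,2)`). -/
theorem statement11 {k A : Type*} [CommRing k] [CommRing A] [Algebra k A]
    (J : Ideal A) {m : ℕ} (M : Fin 3 → Fin 3 → Matrix (Fin m) (Fin m) A)
    (h1 : ∀ a b c : Fin 3, ∀ u v : Fin m, (M a b * M b c - M a c) u v ∈ J)
    (h2 : ∀ a b : Fin 3, ∀ u v : Fin m, (M a b * M b a - 1) u v ∈ J) :
    ∀ u v : Fin m,
      (-(matLMul (M 0 2) (matD k (M 2 1 * M 1 0 - M 2 0))) +
        matRMul (matLMul (M 0 1 * M 1 2) (matD k (M 2 1))) (M 1 0) -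
        matLMul (M 0 2) (matD k (M 2 0)) +
        matLMul (M 0 1) (matD k (M 1 0))) u v ∈
      J • (⊤ : Submodule A (KaehlerDifferential k A)) :=
  statement11_general (KaehlerDifferential.D k A) J (M 1 0) (M 2 0) (h1 0 1 2) (h1 0 2 1)
end

section
/- Let J ⊆ A be an ideal. For a, b ∈ {1,2,3}, let M_{ab} be m×m matrices, M'_{ab} be m'×m' matrices, and D_a be m'×m matrices over A. Assume that, entrywise modulo J, one has M_{ab}·M_{bc} ≡ M_{ac}, M'_{ab}·M'_{bc} ≡ M'_{ac}, M_{ab}·M_{ba} ≡ 1, M'_{ab}·M'_{ba} ≡ 1 for all a, b, c ∈ {1,2,3}, and M'_{ab}·D_b ≡ D_a·M_{ab} for all a, b ∈ {1,2,3}. Then every entry of D_1·M_{13}·(M_{32}·M_{21} − M_{31}) + M'_{12}·M'_{23}·(M'_{32}·D_2 − D_3·M_{32})·M_{21} − M'_{13}·(M'_{31}·D_1 − D_3·M_{31}) + M'_{12}·(M'_{21}·D_1 − D_2·M_{21}) − M'_{13}·(M'_{32}·M'_{21} − M'_{31})·D_1 lies in J². -/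
/-!
Write `c` and `c'` for the transition defects of `M` and `M'`, and `δ` for the differential defect;
modulo `J` they vanish. Expanding `M' k j * M' j i * D i - D k * M k i` in two ways gives the exact
identity `D k * c k j i + δ k j * M j i + M' k j * δ j i = c' k j i * D i + δ k i`.
Multiplied by `M' i k` on the left, it becomes the asserted cocycle identity once
`M' i k * D k`, `M' i k` and `M' i k * M' k j` are replaced by the congruent matrices
`D i * M i k`, `M' i j * M' j k` and `M' i j`. Each replacement happens in front of a defect, so it
changes the sum by a product of two defects, which has entries in `J ^ 2`.
-/

section EntrywiseMembership

variable {R l m n : Type*} [Semiring R] [Fintype m]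

theorem mul_mem_matrix_mul {I J : Ideal R} {X : Matrix l m R} {Y : Matrix m n R}
    (hX : X ∈ Submodule.matrix I) (hY : Y ∈ Submodule.matrix J) :
    X * Y ∈ Submodule.matrix (I * J) := fun u v ↦ by
  rw [Matrix.mul_apply]
  exact sum_mem fun w _ ↦ Ideal.mul_mem_mul (hX u w) (hY w v)

theorem mul_mem_matrix_of_left_mem {I : Ideal R} [I.IsTwoSided] {X : Matrix l m R}
    (hX : X ∈ Submodule.matrix I) (Y : Matrix m n R) : X * Y ∈ Submodule.matrix I := fun u v ↦ by
  rw [Matrix.mul_apply]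
  exact sum_mem fun w _ ↦ I.mul_mem_right _ (hX u w)

end EntrywiseMembership

section Defects

variable {R ι : Type*} {n n' : ι → Type*} [∀ a, Fintype (n a)] [∀ a, Fintype (n' a)]

/-- The failure of the matrices `M a b`, lifts of the transition matrices of a vector bundle, to
satisfy the cocycle condition on a triple overlap. The size of the matrices may depend on the
chart. -/
def transitionDefect [NonUnitalNonAssocRing R] (M : ∀ a b, Matrix (n a) (n b) R) (a b c : ι) :
    Matrix (n a) (n c) R :=
  M a b * M b c - M a c

/-- The failure of the matrices `D a`, lifts of the local matrices of a differential, to commute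
with the lifted transition matrices `M` of its source and `M'` of its target. -/
def differentialDefect [NonUnitalNonAssocRing R] (M : ∀ a b, Matrix (n a) (n b) R)
    (M' : ∀ a b, Matrix (n' a) (n' b) R) (D : ∀ a, Matrix (n' a) (n a) R) (a b : ι) :
    Matrix (n' a) (n b) R :=
  M' a b * D b - D a * M a b

theorem mul_transitionDefect_add_differentialDefect_mul_add [NonUnitalRing R]
    (M : ∀ a b, Matrix (n a) (n b) R) (M' : ∀ a b, Matrix (n' a) (n' b) R)
    (D : ∀ a, Matrix (n' a) (n a) R) (i j k : ι) :
    D k * transitionDefect M k j i + differentialDefect M M' D k j * M j i +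
        M' k j * differentialDefect M M' D j i =
      transitionDefect M' k j i * D i + differentialDefect M M' D k i := by
  simp only [transitionDefect, differentialDefect, Matrix.mul_sub, Matrix.sub_mul, Matrix.mul_assoc]
  abel

theorem mixed_cocycle_eq_mul_defects [NonUnitalRing R]
    (M : ∀ a b, Matrix (n a) (n b) R) (M' : ∀ a b, Matrix (n' a) (n' b) R)
    (D : ∀ a, Matrix (n' a) (n a) R) (i j k : ι) :
    D i * M i k * transitionDefect M k j i +
        M' i j * M' j k * differentialDefect M M' D k j * M j i -
        M' i k * differentialDefect M M' D k i +
        M' i j * differentialDefect M M' D j i -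
        M' i k * transitionDefect M' k j i * D i =
      transitionDefect M' i j k * differentialDefect M M' D k j * M j i -
        differentialDefect M M' D i k * transitionDefect M k j i -
        transitionDefect M' i k j * differentialDefect M M' D j i := by
  have exact_identity : M' i k * (D k * transitionDefect M k j i +
      differentialDefect M M' D k j * M j i + M' k j * differentialDefect M M' D j i -
      (transitionDefect M' k j i * D i + differentialDefect M M' D k i)) = 0 := by
    rw [mul_transitionDefect_add_differentialDefect_mul_add, sub_self, Matrix.mul_zero]
  rw [← sub_eq_zero, ← exact_identity, transitionDefect.eq_def M' i j k,
    transitionDefect.eq_def M' i k j, differentialDefect.eq_def M M' D i k]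
  simp only [Matrix.mul_add, Matrix.mul_sub, Matrix.sub_mul, Matrix.mul_assoc]
  abel

theorem statement12_general [Ring R] (J : Ideal R) [J.IsTwoSided]
    (M : ∀ a b, Matrix (n a) (n b) R) (M' : ∀ a b, Matrix (n' a) (n' b) R)
    (D : ∀ a, Matrix (n' a) (n a) R) (i j k : ι)
    (hM : transitionDefect M k j i ∈ Submodule.matrix J)
    (hM'ijk : transitionDefect M' i j k ∈ Submodule.matrix J)
    (hM'ikj : transitionDefect M' i k j ∈ Submodule.matrix J)
    (hDik : differentialDefect M M' D i k ∈ Submodule.matrix J)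
    (hDji : differentialDefect M M' D j i ∈ Submodule.matrix J)
    (hDkj : differentialDefect M M' D k j ∈ Submodule.matrix J) :
    D i * M i k * transitionDefect M k j i +
        M' i j * M' j k * differentialDefect M M' D k j * M j i -
        M' i k * differentialDefect M M' D k i +
        M' i j * differentialDefect M M' D j i -
        M' i k * transitionDefect M' k j i * D i ∈ Submodule.matrix (J ^ 2) := by
  rw [mixed_cocycle_eq_mul_defects, Submodule.pow_succ, Submodule.pow_one]
  exact sub_mem (sub_mem
    (mul_mem_matrix_of_left_mem (mul_mem_matrix_mul hM'ijk hDkj) (M j i))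
    (mul_mem_matrix_mul hDik hM))
    (mul_mem_matrix_mul hM'ikj hDji)

end Defects

/-- Let `J ⊆ A` be an ideal.  For `a, b ∈ {1,2,3}` (indexed by `Fin 3`, `(1,2,3) = (0,1,2)`),
let `M a b` be `m × m` matrices, `M' a b` be `m' × m'` matrices and `D a` be `m' × m` matrices
over `A`.  Assume that, entrywise modulo `J`, `M a b * M b c ≡ M a c`,
`M' a b * M' b c ≡ M' a c`, `M a b * M b a ≡ 1`, `M' a b * M' b a ≡ 1` and
`M' a b * D b ≡ D a * M a b`.  Then every entry of
`D₁·M₁₃·(M₃₂·M₂₁ - M₃₁) + M'₁₂·M'₂₃·(M'₃₂·D₂ - D₃·M₃₂)·M₂₁ - M'₁₃·(M'₃₁·D₁ - D₃·M₃₁)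
 + M'₁₂·(M'₂₁·D₁ - D₂·M₂₁) - M'₁₃·(M'₃₂·M'₂₁ - M'₃₁)·D₁` lies in `J ^ 2`. -/
theorem statement12 {A : Type*} [CommRing A] (J : Ideal A) {m m' : ℕ}
    (M : Fin 3 → Fin 3 → Matrix (Fin m) (Fin m) A)
    (M' : Fin 3 → Fin 3 → Matrix (Fin m') (Fin m') A)
    (D : Fin 3 → Matrix (Fin m') (Fin m) A)
    (hM : ∀ a b c : Fin 3, ∀ u v : Fin m, (M a b * M b c - M a c) u v ∈ J)
    (hM' : ∀ a b c : Fin 3, ∀ u v : Fin m', (M' a b * M' b c - M' a c) u v ∈ J)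
    (hM1 : ∀ a b : Fin 3, ∀ u v : Fin m, (M a b * M b a - 1) u v ∈ J)
    (hM'1 : ∀ a b : Fin 3, ∀ u v : Fin m', (M' a b * M' b a - 1) u v ∈ J)
    (hD : ∀ a b : Fin 3, ∀ u : Fin m', ∀ v : Fin m, (M' a b * D b - D a * M a b) u v ∈ J) :
    ∀ u : Fin m', ∀ v : Fin m,
      (D 0 * M 0 2 * (M 2 1 * M 1 0 - M 2 0) +
        M' 0 1 * M' 1 2 * (M' 2 1 * D 1 - D 2 * M 2 1) * M 1 0 -
        M' 0 2 * (M' 2 0 * D 0 - D 2 * M 2 0) +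
        M' 0 1 * (M' 1 0 * D 0 - D 1 * M 1 0) -
        M' 0 2 * (M' 2 1 * M' 1 0 - M' 2 0) * D 0) u v ∈ J ^ 2 :=
  statement12_general J M M' D 0 1 2 (hM 2 1 0) (hM' 0 1 2) (hM' 0 2 1) (hD 0 2) (hD 1 0) (hD 2 1)
end

section
/- Let J ⊆ A be an ideal. Let M_{21} be an m×m matrix, M'_{12}, M'_{21} be m'×m' matrices, M''_{12}, M''_{21} be m''×m'' matrices, D_1, D_2 be m'×m matrices, and D'_1, D'_2 be m''×m' matrices over A. Assume that every entry of M'_{21}·D_1 − D_2·M_{21}, of M''_{12}·D'_2 − D'_1·M'_{12}, of M''_{21}·D'_1 − D'_2·M'_{21}, of M''_{12}·M''_{21} − 1, of D'_1·D_1, and of D'_2·D_2 lies in J. Then every entry of −D'_1·M'_{12}·(M'_{21}·D_1 − D_2·M_{21}) − M''_{12}·D'_2·D_2·M_{21} + D'_1·D_1 − M''_{12}·(M''_{21}·D'_1 − D'_2·M'_{21})·D_1 lies in J². -/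
/-!
Modulo `J ^ 2`, the first two terms of the cocycle sum to `-M''₁₂·D'₂·M'₂₁·D₁` and the last two to
its negative. The error in the first sum is `M''₁₂·D'₂ - D'₁·M'₁₂` times `M'₂₁·D₁ - D₂·M₂₁`, and the
error in the second is, up to sign, `M''₁₂·M''₂₁ - 1` times `D'₁·D₁`: both are products of two
matrices with entries in `J`.
-/

theorem matrix_mul_apply_mem_mul {A : Type*} [Semiring A] {l m n : Type*} [Fintype m]
    {I J : Ideal A} {X : Matrix l m A} {Y : Matrix m n A} {i : l} {j : n}
    (hX : ∀ k, X i k ∈ I) (hY : ∀ k, Y k j ∈ J) : (X * Y) i j ∈ I * J := by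
  rw [Matrix.mul_apply]
  exact sum_mem fun k _ => Ideal.mul_mem_mul (hX k) (hY k)

section MatrixCocycle

variable {A : Type*} [Ring A] {n₁ n₂ n'₁ n'₂ n''₁ n''₂ : Type*}
  [Fintype n₂] [Fintype n'₁] [Fintype n'₂] [Fintype n''₁] [Fintype n''₂] [DecidableEq n''₁]

theorem cocycle_expr_eq_mul_sub_mul
    (M21 : Matrix n₂ n₁ A) (M'12 : Matrix n'₁ n'₂ A) (M'21 : Matrix n'₂ n'₁ A)
    (M''12 : Matrix n''₁ n''₂ A) (M''21 : Matrix n''₂ n''₁ A)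
    (D1 : Matrix n'₁ n₁ A) (D2 : Matrix n'₂ n₂ A)
    (D'1 : Matrix n''₁ n'₁ A) (D'2 : Matrix n''₂ n'₂ A) :
    -(D'1 * M'12 * (M'21 * D1 - D2 * M21)) - M''12 * D'2 * D2 * M21 + D'1 * D1 -
        M''12 * (M''21 * D'1 - D'2 * M'21) * D1 =
      (M''12 * D'2 - D'1 * M'12) * (M'21 * D1 - D2 * M21) -
        (M''12 * M''21 - 1) * (D'1 * D1) := by
  have first_sum : -(D'1 * M'12 * (M'21 * D1 - D2 * M21)) - M''12 * D'2 * D2 * M21 =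
      (M''12 * D'2 - D'1 * M'12) * (M'21 * D1 - D2 * M21) - M''12 * D'2 * M'21 * D1 := by
    simp only [Matrix.mul_sub, Matrix.sub_mul, Matrix.mul_assoc]
    abel
  have second_sum : D'1 * D1 - M''12 * (M''21 * D'1 - D'2 * M'21) * D1 =
      M''12 * D'2 * M'21 * D1 - (M''12 * M''21 - 1) * (D'1 * D1) := by
    simp only [Matrix.mul_sub, Matrix.sub_mul, Matrix.mul_assoc, Matrix.one_mul]
    abel
  rw [add_sub_assoc, first_sum, second_sum, sub_add_sub_cancel]

theorem statement14_general (J : Ideal A)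
    (M21 : Matrix n₂ n₁ A) (M'12 : Matrix n'₁ n'₂ A) (M'21 : Matrix n'₂ n'₁ A)
    (M''12 : Matrix n''₁ n''₂ A) (M''21 : Matrix n''₂ n''₁ A)
    (D1 : Matrix n'₁ n₁ A) (D2 : Matrix n'₂ n₂ A)
    (D'1 : Matrix n''₁ n'₁ A) (D'2 : Matrix n''₂ n'₂ A)
    (hD : ∀ u v, (M'21 * D1 - D2 * M21) u v ∈ J)
    (hD' : ∀ u v, (M''12 * D'2 - D'1 * M'12) u v ∈ J)
    (hM'' : ∀ u v, (M''12 * M''21 - 1 : Matrix n''₁ n''₁ A) u v ∈ J)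
    (hD'D : ∀ u v, (D'1 * D1) u v ∈ J) (u : n''₁) (v : n₁) :
    (-(D'1 * M'12 * (M'21 * D1 - D2 * M21)) - M''12 * D'2 * D2 * M21 + D'1 * D1 -
      M''12 * (M''21 * D'1 - D'2 * M'21) * D1) u v ∈ J ^ 2 := by
  rw [cocycle_expr_eq_mul_sub_mul, Matrix.sub_apply, Submodule.pow_succ, Submodule.pow_one]
  exact sub_mem (matrix_mul_apply_mem_mul (hD' u) fun k => hD k v)
    (matrix_mul_apply_mem_mul (hM'' u) fun k => hD'D k v)

end MatrixCocycle

/-- Let `J ⊆ A` be an ideal.  Let `M₂₁` be an `m × m` matrix, `M'₁₂, M'₂₁` be `m' × m'`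
matrices, `M''₁₂, M''₂₁` be `m'' × m''` matrices, `D₁, D₂` be `m' × m` matrices, and
`D'₁, D'₂` be `m'' × m'` matrices over `A`.  Assume that every entry of
`M'₂₁·D₁ - D₂·M₂₁`, of `M''₁₂·D'₂ - D'₁·M'₁₂`, of `M''₂₁·D'₁ - D'₂·M'₂₁`, of
`M''₁₂·M''₂₁ - 1`, of `D'₁·D₁` and of `D'₂·D₂` lies in `J`.  Then every entry of
`-D'₁·M'₁₂·(M'₂₁·D₁ - D₂·M₂₁) - M''₁₂·D'₂·D₂·M₂₁ + D'₁·D₁ - M''₁₂·(M''₂₁·D'₁ - D'₂·M'₂₁)·D₁`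
lies in `J ^ 2`. -/
theorem statement14 {A : Type*} [CommRing A] (J : Ideal A) {m m' m'' : ℕ}
    (M21 : Matrix (Fin m) (Fin m) A)
    (M'12 M'21 : Matrix (Fin m') (Fin m') A)
    (M''12 M''21 : Matrix (Fin m'') (Fin m'') A)
    (D1 D2 : Matrix (Fin m') (Fin m) A)
    (D'1 D'2 : Matrix (Fin m'') (Fin m') A)
    (h1 : ∀ u : Fin m', ∀ v : Fin m, (M'21 * D1 - D2 * M21) u v ∈ J)
    (h2 : ∀ u : Fin m'', ∀ v : Fin m', (M''12 * D'2 - D'1 * M'12) u v ∈ J)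
    (h3 : ∀ u : Fin m'', ∀ v : Fin m', (M''21 * D'1 - D'2 * M'21) u v ∈ J)
    (h4 : ∀ u v : Fin m'', (M''12 * M''21 - 1) u v ∈ J)
    (h5 : ∀ u : Fin m'', ∀ v : Fin m, (D'1 * D1) u v ∈ J)
    (h6 : ∀ u : Fin m'', ∀ v : Fin m, (D'2 * D2) u v ∈ J) :
    ∀ u : Fin m'', ∀ v : Fin m,
      (-(D'1 * M'12 * (M'21 * D1 - D2 * M21)) -
        M''12 * D'2 * D2 * M21 +
        D'1 * D1 -
        M''12 * (M''21 * D'1 - D'2 * M'21) * D1) u v ∈ J ^ 2 :=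
  statement14_general J M21 M'12 M'21 M''12 M''21 D1 D2 D'1 D'2 h1 h2 h4 h5
end
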